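/- arXiv:2111.10406 — 3 statements merged into one kernel-verified Lean document; each statement's English description precedes it below -/
import Mathlib

section
/- Let Θ ⊆ ℝ^d be a nonempty closed set, ρ a lower semicontinuous metric on Θ, μ a probability measure on Θ, x ∈ Θ, and s ∈ [0, 1]. Then the mixture ν = (1 − s)μ + sδ_x satisfies W_ρ(ν, μ) = s ∫_Θ ρ(y, x) dμ(y), where δ_x is the Dirac measure at x. -/
/-!
The upper bound comes from the coupling that leaves the mass `1 - s` in place and sends the mass
`s` at `x` to `μ`: its diagonal part costs nothing and its other part costs `s ∫ ρ(x, y) dμ(y)`.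

The lower bound is the easy half of Kantorovich duality. By the triangle inequality, each
truncation `f = min (ρ(·, x)) n` is `1`-Lipschitz for `ρ` and vanishes at `x`, so any coupling of
`ν = (1 - s) μ + s δ_x` and `μ` costs at least `∫ f dμ - ∫ f dν = s ∫ f dμ`. The truncation makes
these integrals finite, so the subtraction is legitimate even when `∫ ρ(y, x) dμ(y) = ∞`;
monotone convergence in `n` concludes. Lower semicontinuity serves to make `ρ(·, x)` measurable
on `Θ`.
-/

open MeasureTheory ENNReal Filter Matrix
open scoped BigOperators NNReal

noncomputable section

/-- The set of couplings of two measures. -/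
def couplings {E : Type*} [MeasurableSpace E] (μ ν : Measure E) : Set (Measure (E × E)) :=
  {ξ | ξ.map Prod.fst = μ ∧ ξ.map Prod.snd = ν}

/-- The `L₁` Wasserstein (transportation) distance with cost `ρ`, valued in `ℝ≥0∞`:
`W_ρ(μ, ν) = inf over couplings ξ of ∫ ρ dξ`. -/
def wassersteinDist {E : Type*} [MeasurableSpace E] (ρ : E → E → ℝ)
    (μ ν : Measure E) : ℝ≥0∞ :=
  ⨅ ξ ∈ couplings μ ν, ∫⁻ p, ENNReal.ofReal (ρ p.1 p.2) ∂ξ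

/-- `ρ` is a lower semicontinuous metric on the set `Θ`. -/
def IsLSCMetricOn {E : Type*} [TopologicalSpace E] (Θ : Set E) (ρ : E → E → ℝ) : Prop :=
  LowerSemicontinuousOn (fun p : E × E => ρ p.1 p.2) (Θ ×ˢ Θ) ∧
  (∀ x ∈ Θ, ∀ y ∈ Θ, 0 ≤ ρ x y) ∧ (∀ x ∈ Θ, ρ x x = 0) ∧
  (∀ x ∈ Θ, ∀ y ∈ Θ, ρ x y = 0 → x = y) ∧
  (∀ x ∈ Θ, ∀ y ∈ Θ, ρ x y = ρ y x) ∧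
  (∀ x ∈ Θ, ∀ y ∈ Θ, ∀ z ∈ Θ, ρ x z ≤ ρ x y + ρ y z)

/-- Metropolis–Hastings acceptance ratio for target density `π` and proposal density `q`. -/
def mhAccept {E : Type*} (π : E → ℝ) (q : E → E → ℝ) (θ θ' : E) : ℝ :=
  if 0 < π θ * q θ θ' then min (π θ' * q θ' θ / (π θ * q θ θ')) 1 else 1

/-- Metropolis–Hastings overall acceptance probability `A(θ)`. -/
def mhAcceptProb {E : Type*} [MeasureSpace E] (Θ : Set E) (π : E → ℝ) (q : E → E → ℝ)
    (θ : E) : ℝ :=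
  ∫ θ' in Θ, mhAccept π q θ θ' * q θ θ'

/-- The Metropolis–Hastings Markov kernel
`P(θ, B) = ∫_B a(θ,θ') q(θ,θ') dθ' + δ_θ(B) (1 - A(θ))`. -/
def mhKernel {E : Type*} [MeasureSpace E] (Θ : Set E) (π : E → ℝ) (q : E → E → ℝ)
    (θ : E) : Measure E :=
  (volume.restrict Θ).withDensity (fun θ' => ENNReal.ofReal (mhAccept π q θ θ' * q θ θ')) +
    (ENNReal.ofReal (1 - mhAcceptProb Θ π q θ)) • Measure.dirac θ

/-- `t`-fold iterate `P^t` of a Markov kernel, with `P^0(θ, ·) = δ_θ`. -/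
def kernelIter {E : Type*} [MeasurableSpace E] (P : E → Measure E) : ℕ → E → Measure E
  | 0, θ => Measure.dirac θ
  | (t + 1), θ => (P θ).bind (kernelIter P t)

end

/-- A function lower semicontinuous on a closed set becomes Borel measurable after its values off
that set are replaced by `0`. -/
lemma measurable_indicator_of_lowerSemicontinuousOn {E : Type*} [TopologicalSpace E]
    [MeasurableSpace E] [BorelSpace E] {Θ : Set E} (hΘ : IsClosed Θ) {f : E → ℝ}
    (hf : LowerSemicontinuousOn f Θ) : Measurable (Θ.indicator f) := by
  rw [← lowerSemicontinuous_restrict_iff] at hf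
  refine measurable_of_restrict_of_restrict_compl hΘ.measurableSet ?_ ?_
  · convert hf.measurable using 1
    ext y
    simp
  · convert measurable_const (a := (0 : ℝ)) using 1
    ext y
    exact Set.indicator_of_notMem y.2 f

/-- Kantorovich lower bound for the mixture, with a bounded test function `f` that vanishes at `x`
and is `1`-Lipschitz for the cost `c` on a set of full measure. The weights satisfy `p + q = 1`, and
`c` need not be measurable. -/
lemma mul_lintegral_le_of_coupling {E : Type*} [MeasurableSpace E] {Θ : Set E}
    (hΘ : MeasurableSet Θ) {μ : Measure E} [IsProbabilityMeasure μ] (hμΘ : μ Θᶜ = 0)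
    {x : E} (hx : x ∈ Θ) {p q : ℝ≥0∞} (hpq : p + q = 1) {c : E × E → ℝ≥0∞}
    {f : E → ℝ≥0∞} (hf : Measurable f) {n : ℝ≥0∞} (hn : n ≠ ∞) (hfn : ∀ y, f y ≤ n)
    (hfx : f x = 0) (hlip : ∀ a ∈ Θ, ∀ b ∈ Θ, f b ≤ f a + c (a, b))
    {ξ : Measure (E × E)} (hξ : ξ ∈ couplings (p • μ + q • Measure.dirac x) μ) :
    q * ∫⁻ y, f y ∂μ ≤ ∫⁻ z, c z ∂ξ := by
  obtain ⟨h1, h2⟩ := hξ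
  have hp : p ≠ ∞ := ne_top_of_le_ne_top one_ne_top (hpq ▸ le_self_add)
  have hfin : ∫⁻ y, f y ∂μ ≠ ∞ := by
    refine ne_top_of_le_ne_top hn ((lintegral_mono hfn).trans ?_)
    simp
  have ha : ∀ᵐ z ∂ξ, z.1 ∈ Θ := by
    refine ae_of_ae_map (p := fun y => y ∈ Θ) measurable_fst.aemeasurable ?_
    rw [h1, ae_iff]
    change (p • μ + q • Measure.dirac x) Θᶜ = 0
    simp [hμΘ, Measure.dirac_apply' _ hΘ.compl, hx]
  have hb : ∀ᵐ z ∂ξ, z.2 ∈ Θ := by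
    refine ae_of_ae_map (p := fun y => y ∈ Θ) measurable_snd.aemeasurable ?_
    rw [h2, ae_iff]
    exact hμΘ
  have e1 : ∫⁻ z, f z.1 ∂ξ = p * ∫⁻ y, f y ∂μ := by
    rw [← lintegral_map hf measurable_fst, h1, lintegral_add_measure, lintegral_smul_measure,
      lintegral_smul_measure, lintegral_dirac' _ hf, hfx]
    simp
  have e2 : ∫⁻ z, f z.2 ∂ξ = ∫⁻ y, f y ∂μ := by
    rw [← lintegral_map hf measurable_snd, h2]
  have key : ∫⁻ z, f z.2 ∂ξ ≤ ∫⁻ z, f z.1 ∂ξ + ∫⁻ z, c z ∂ξ := by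
    rw [← lintegral_add_left (f := fun z : E × E => f z.1) (hf.comp measurable_fst)]
    refine lintegral_mono_ae ?_
    filter_upwards [ha, hb] with z hza hzb using hlip _ hza _ hzb
  rw [e1, e2] at key
  refine (ENNReal.add_le_add_iff_left (ENNReal.mul_ne_top hp hfin)).1 (le_trans (le_of_eq ?_) key)
  rw [← add_mul, hpq, one_mul]

/-- for a lower semicontinuous metric `ρ` on a nonempty closed set
`Θ ⊆ ℝ^d`, a probability measure `μ` on `Θ`, `x ∈ Θ`, and `s ∈ [0,1]`, the mixture
`ν = (1-s) μ + s δ_x` satisfies `W_ρ(ν, μ) = s ∫_Θ ρ(y, x) dμ(y)`. -/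
theorem wassersteinDist_mixture_dirac
    {d : ℕ} (Θ : Set (Fin d → ℝ)) (hΘne : Θ.Nonempty) (hΘcl : IsClosed Θ)
    (ρ : (Fin d → ℝ) → (Fin d → ℝ) → ℝ) (hρ : IsLSCMetricOn Θ ρ)
    (μ : Measure (Fin d → ℝ)) [IsProbabilityMeasure μ] (hμΘ : μ Θᶜ = 0)
    (x : Fin d → ℝ) (hx : x ∈ Θ)
    (s : ℝ) (hs : s ∈ Set.Icc (0 : ℝ) 1) :
    wassersteinDist ρ
        (ENNReal.ofReal (1 - s) • μ + ENNReal.ofReal s • Measure.dirac x) μ =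
      ENNReal.ofReal s * ∫⁻ y, ENNReal.ofReal (ρ y x) ∂μ := by
  obtain ⟨hlsc, hnn, hzero, -, hsymm, htri⟩ := hρ
  have hpq : ENNReal.ofReal (1 - s) + ENNReal.ofReal s = 1 := by
    rw [← ENNReal.ofReal_add (by linarith [hs.2]) hs.1]
    simp
  generalize ENNReal.ofReal (1 - s) = p at *
  generalize ENNReal.ofReal s = q at *
  have hae : ∀ᵐ y ∂μ, y ∈ Θ := by
    rw [ae_iff]
    exact hμΘ
  apply le_antisymm
  · have hdiag : Measurable fun y : Fin d → ℝ => (y, y) := by fun_prop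
    have hmk : Measurable fun y : Fin d → ℝ => (x, y) := by fun_prop
    have hcoup : p • μ.map (fun y => (y, y)) + q • μ.map (fun y => (x, y)) ∈
        couplings (p • μ + q • Measure.dirac x) μ := by
      constructor
      · rw [Measure.map_add _ _ measurable_fst, Measure.map_smul, Measure.map_smul,
          Measure.map_map measurable_fst hdiag, Measure.map_map measurable_fst hmk]
        simp [Function.comp_def, Measure.map_const]
      · rw [Measure.map_add _ _ measurable_snd, Measure.map_smul, Measure.map_smul,
          Measure.map_map measurable_snd hdiag, Measure.map_map measurable_snd hmk]
        simp [Function.comp_def, ← add_smul, hpq]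
    refine (iInf₂_le _ hcoup).trans ?_
    rw [lintegral_add_measure, lintegral_smul_measure, lintegral_smul_measure]
    -- `lintegral_map_le` avoids any measurability of `ρ`, which is arbitrary off `Θ ×ˢ Θ`.
    have i1 : ∫⁻ z, ENNReal.ofReal (ρ z.1 z.2) ∂(μ.map fun y => (y, y)) = 0 := by
      refine le_antisymm ((lintegral_map_le _ _).trans (le_of_eq ?_)) zero_le
      rw [← lintegral_zero (μ := μ)]
      refine lintegral_congr_ae ?_
      filter_upwards [hae] with y hy
      simp [hzero y hy]
    have i2 : ∫⁻ z, ENNReal.ofReal (ρ z.1 z.2) ∂(μ.map fun y => (x, y)) ≤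
        ∫⁻ y, ENNReal.ofReal (ρ y x) ∂μ := by
      refine (lintegral_map_le _ _).trans (le_of_eq (lintegral_congr_ae ?_))
      filter_upwards [hae] with y hy
      simp [hsymm x hx y hy]
    rw [i1, smul_zero, zero_add, smul_eq_mul]
    gcongr
  · refine le_iInf₂ fun ξ hξ => ?_
    have hlx : LowerSemicontinuousOn (fun y => ρ y x) Θ :=
      hlsc.comp (t := Θ) (g := fun y => (y, x)) (by fun_prop) fun y hy => ⟨hy, hx⟩
    set g : (Fin d → ℝ) → ℝ≥0∞ := fun y => ENNReal.ofReal (Θ.indicator (fun y => ρ y x) y)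
      with hg
    have hgm : Measurable g :=
      (measurable_indicator_of_lowerSemicontinuousOn hΘcl hlx).ennreal_ofReal
    have hgΘ : ∀ y ∈ Θ, g y = ENNReal.ofReal (ρ y x) := fun y hy => by simp [hg, hy]
    have hsup : ∫⁻ y, ENNReal.ofReal (ρ y x) ∂μ = ⨆ n : ℕ, ∫⁻ y, min (g y) n ∂μ := by
      rw [← lintegral_iSup (fun n => hgm.min measurable_const)
        fun m n hmn y => min_le_min_left _ (by exact_mod_cast hmn)]
      refine lintegral_congr_ae ?_
      filter_upwards [hae] with y hy
      rw [← hgΘ y hy]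
      change g y = ⨆ n : ℕ, g y ⊓ (n : ℝ≥0∞)
      rw [← inf_iSup_eq, ENNReal.iSup_natCast, inf_top_eq]
    rw [hsup, ENNReal.mul_iSup]
    refine iSup_le fun n => ?_
    refine mul_lintegral_le_of_coupling hΘcl.measurableSet hμΘ hx hpq
      (hgm.min measurable_const) (ENNReal.natCast_ne_top n) (fun y => min_le_right _ _) ?_ ?_ hξ
    · simp [hgΘ x hx, hzero x hx]
    · intro a ha b hb
      have hgab : g b ≤ g a + ENNReal.ofReal (ρ a b) := by
        rw [hgΘ a ha, hgΘ b hb, ← ENNReal.ofReal_add (hnn a ha x hx) (hnn a ha b hb)]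
        refine ENNReal.ofReal_le_ofReal ?_
        linarith [htri b hb a ha x hx, hsymm a ha b hb]
      rw [← min_add_add_right]
      exact min_le_min hgab le_self_add
end

section
/- For the Metropolis–Hastings independence algorithm with acceptance probability A(θ) = ∫_Θ min{π(θ′)q(θ)/(π(θ)q(θ′)), 1} q(θ′) dθ′, if (θ_n)_n ⊂ Θ is a sequence with π(θ_n) > 0 for all n and q(θ_n)/π(θ_n) → 0 as n → +∞, then A(θ_n) → 0 as n → +∞. Consequently, if inf_{θ ∈ Θ}{q(θ)/π(θ)} = 0 then inf_{θ ∈ Θ} A(θ) = 0. -/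
/-!
The key fact is the pointwise estimate `a(θ, θ') q(θ') ≤ π(θ') (q(θ) / π(θ))` whenever
`π(θ) > 0`: the proposal density cancels against the denominator of the acceptance ratio.
Integrating over `Θ` and using that `π` has total mass one gives
`0 ≤ A(θ) ≤ q(θ) / π(θ)` (`mhiAcceptProb_nonneg`, `mhiAcceptProb_le`), and both claims follow by
squeezing.
-/

open MeasureTheory ENNReal Filter Matrix
open scoped BigOperators NNReal

noncomputable section

/-- Acceptance ratio for the Metropolis–Hastings independence (MHI) algorithm, whose
proposal density `q` does not depend on the current state. -/
def mhiAccept {E : Type*} (π : E → ℝ) (q : E → ℝ) (θ θ' : E) : ℝ :=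
  if 0 < π θ * q θ' then min (π θ' * q θ / (π θ * q θ')) 1 else 1

/-- Overall acceptance probability `A(θ)` for the MHI algorithm. -/
def mhiAcceptProb {E : Type*} [MeasureSpace E] (Θ : Set E) (π : E → ℝ) (q : E → ℝ)
    (θ : E) : ℝ :=
  ∫ θ' in Θ, mhiAccept π q θ θ' * q θ'

/-- The MHI Markov kernel
`P(θ, B) = ∫_B a(θ,θ') q(θ') dθ' + δ_θ(B) (1 - A(θ))`. -/
def mhiKernel {E : Type*} [MeasureSpace E] (Θ : Set E) (π : E → ℝ) (q : E → ℝ)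
    (θ : E) : Measure E :=
  (volume.restrict Θ).withDensity (fun θ' => ENNReal.ofReal (mhiAccept π q θ θ' * q θ')) +
    (ENNReal.ofReal (1 - mhiAcceptProb Θ π q θ)) • Measure.dirac θ

end

theorem mhiAccept_nonneg {E : Type*} {π q : E → ℝ} (hπ0 : ∀ θ, 0 ≤ π θ)
    (hq0 : ∀ θ, 0 ≤ q θ) (θ θ' : E) : 0 ≤ mhiAccept π q θ θ' := by
  unfold mhiAccept
  split_ifs with h
  · exact le_min (div_nonneg (mul_nonneg (hπ0 _) (hq0 _)) h.le) zero_le_one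
  · exact zero_le_one

theorem mhiAcceptProb_nonneg {E : Type*} [MeasureSpace E] (Θ : Set E) {π q : E → ℝ}
    (hπ0 : ∀ θ, 0 ≤ π θ) (hq0 : ∀ θ, 0 ≤ q θ) (θ : E) : 0 ≤ mhiAcceptProb Θ π q θ :=
  integral_nonneg fun θ' => mul_nonneg (mhiAccept_nonneg hπ0 hq0 θ θ') (hq0 θ')

theorem mhiAccept_mul_le {E : Type*} {π q : E → ℝ} (hπ0 : ∀ θ, 0 ≤ π θ)
    (hq0 : ∀ θ, 0 ≤ q θ) {θ : E} (hθ : 0 < π θ) (θ' : E) :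
    mhiAccept π q θ θ' * q θ' ≤ π θ' * (q θ / π θ) := by
  rcases (hq0 θ').eq_or_lt with h | h
  · -- Here the acceptance ratio takes its default value `1`, but the weight `q θ'` vanishes.
    rw [← h, mul_zero]
    exact mul_nonneg (hπ0 _) (div_nonneg (hq0 _) hθ.le)
  · rw [mhiAccept, if_pos (mul_pos hθ h)]
    calc min (π θ' * q θ / (π θ * q θ')) 1 * q θ'
        ≤ π θ' * q θ / (π θ * q θ') * q θ' :=
          mul_le_mul_of_nonneg_right (min_le_left _ _) h.le
      _ = π θ' * (q θ / π θ) := by field_simp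

/-- The hypothesis `hπ1` says that `π` has total mass one on `Θ`. -/
theorem mhiAcceptProb_le {E : Type*} [MeasureSpace E] {Θ : Set E} {π q : E → ℝ}
    (hπmeas : Measurable π) (hπ0 : ∀ θ, 0 ≤ π θ) (hq0 : ∀ θ, 0 ≤ q θ)
    (hπ1 : ∫⁻ θ in Θ, ENNReal.ofReal (π θ) = 1) {θ : E} (hθ : 0 < π θ) :
    mhiAcceptProb Θ π q θ ≤ q θ / π θ := by
  have hint : Integrable π (volume.restrict Θ) := by
    refine ⟨hπmeas.aestronglyMeasurable, ?_⟩
    rw [hasFiniteIntegral_iff_ofReal (Eventually.of_forall hπ0), hπ1]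
    exact ENNReal.one_lt_top
  have hone : ∫ θ in Θ, π θ = 1 := by
    rw [integral_eq_lintegral_of_nonneg_ae (Eventually.of_forall hπ0)
      hπmeas.aestronglyMeasurable, hπ1, ENNReal.toReal_one]
  calc mhiAcceptProb Θ π q θ ≤ ∫ θ' in Θ, π θ' * (q θ / π θ) :=
        integral_mono_of_nonneg
          (Eventually.of_forall fun θ' => mul_nonneg (mhiAccept_nonneg hπ0 hq0 θ θ') (hq0 θ'))
          (hint.mul_const _) (Eventually.of_forall fun θ' => mhiAccept_mul_le hπ0 hq0 hθ θ')
    _ = q θ / π θ := by rw [integral_mul_const, hone, one_mul]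

/-- for the MHI algorithm, if `(θ_n) ⊆ Θ` with `π(θ_n) > 0` and
`q(θ_n)/π(θ_n) → 0`, then `A(θ_n) → 0`; consequently, if
`inf_{θ ∈ Θ} q(θ)/π(θ) = 0` then `inf_{θ ∈ Θ} A(θ) = 0`. -/
theorem mhi_accept_prob_tendsto_zero
    {d : ℕ}
    (Θ : Set (Fin d → ℝ)) (hΘne : Θ.Nonempty) (hΘcl : IsClosed Θ)
    (π : (Fin d → ℝ) → ℝ) (q : (Fin d → ℝ) → ℝ)
    (hπmeas : Measurable π) (hπ0 : ∀ θ, 0 ≤ π θ)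
    (hqmeas : Measurable q) (hq0 : ∀ θ', 0 ≤ q θ')
    (hqpos : ∀ θ' ∈ Θ, 0 < π θ' → 0 < q θ')
    -- the support of `π` on `Θ` is nonempty
    (hsupp : ∃ θ ∈ Θ, 0 < π θ)
    -- `Π` is a probability measure on `Θ` with Lebesgue density `π`
    (Pi : Measure (Fin d → ℝ)) [IsProbabilityMeasure Pi]
    (hPi : Pi = (volume.restrict Θ).withDensity fun θ => ENNReal.ofReal (π θ))
    -- the proposal `Q` is a probability measure on `Θ` with density `q`, different from `Π`
    (hQprob : IsProbabilityMeasure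
      ((volume.restrict Θ).withDensity fun θ' => ENNReal.ofReal (q θ')))
    (hQnePi : ((volume.restrict Θ).withDensity fun θ' => ENNReal.ofReal (q θ')) ≠ Pi) :
    (∀ θseq : ℕ → (Fin d → ℝ), (∀ n, θseq n ∈ Θ ∧ 0 < π (θseq n)) →
      Tendsto (fun n => q (θseq n) / π (θseq n)) atTop (nhds 0) →
        Tendsto (fun n => mhiAcceptProb Θ π q (θseq n)) atTop (nhds 0)) ∧
    ((⨅ θ : {θ : Fin d → ℝ // θ ∈ Θ ∧ 0 < π θ},
        q (θ : Fin d → ℝ) / π (θ : Fin d → ℝ)) = 0 →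
      (⨅ θ : Θ, mhiAcceptProb Θ π q (θ : Fin d → ℝ)) = 0) := by
  have hπ1 : ∫⁻ θ in Θ, ENNReal.ofReal (π θ) = 1 := by
    have h : Pi Set.univ = 1 := measure_univ
    rwa [hPi, withDensity_apply _ MeasurableSet.univ, Measure.restrict_univ] at h
  have hnn := mhiAcceptProb_nonneg Θ hπ0 hq0
  refine ⟨fun θseq hθ hlim => ?_, fun hinf => ?_⟩
  · exact squeeze_zero (fun n => hnn _)
      (fun n => mhiAcceptProb_le hπmeas hπ0 hq0 hπ1 (hθ n).2) hlim
  · -- The nonempty support makes the first infimum one over a nonempty type, so its vanishing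
    -- is not the junk value of `sInf ∅`.
    obtain ⟨θ₀, hθ₀⟩ := hsupp
    have : Nonempty {θ : Fin d → ℝ // θ ∈ Θ ∧ 0 < π θ} := ⟨⟨θ₀, hθ₀⟩⟩
    refine le_antisymm ?_ (Real.iInf_nonneg fun θ => hnn _)
    rw [← hinf]
    refine le_ciInf fun θ => ?_
    exact (ciInf_le ⟨0, by rintro _ ⟨x, rfl⟩; exact hnn _⟩ (⟨θ.1, θ.2.1⟩ : Θ)).trans
      (mhiAcceptProb_le hπmeas hπ0 hq0 hπ1 θ.2.2)
end

section
/- Let f : ℝ^d → ℝ be twice continuously differentiable with ∇f(β*) = 0, and let M be a symmetric positive-definite d×d matrix such that vᵀ H_f(β) v ≤ vᵀ M v for all β, v ∈ ℝ^d, where H_f denotes the Hessian of f. Then f(β) ≤ f(β*) + (1/2)(β − β*)ᵀ M (β − β*) for all β ∈ ℝ^d, and consequently ∫_{ℝ^d} exp(−f(β)) dβ ≥ exp(−f(β*)) (2π)^{d/2} det(M)^{−1/2}. -/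
open Matrix MeasureTheory
open scoped BigOperators

/-!
Restricting `f` to the line through `βstar` and `β` and expanding to first order at `βstar`, the linear
term vanishes because the gradient does, and the Lagrange remainder is half a second directional
derivative, which `M` bounds; this is `le_quadratic_of_hessian_le`.

Exponentiating bounds `exp (-f)` below by a translated Gaussian times `exp (-f βstar)`, so it remains
to integrate a Gaussian. Writing `M = Bᵀ * B` with `B` invertible, the substitution `y = B x` turns
`xᵀ M x` into `∑ i, (y i) ^ 2` at the cost of a factor `|det B|⁻¹ = (det M) ^ (-1/2)`, and the standard
Gaussian integral is a product of one-dimensional ones (`lintegral_exp_neg_half_quadratic`).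
-/

/-- Second-order bound on the displacement `v` from a critical point `b`, given an upper bound `q` on the
second directional derivatives along `v` at every base point. -/
lemma le_quadratic_of_hessian_le {d : ℕ} (f : (Fin d → ℝ) → ℝ) (hf : ContDiff ℝ 2 f)
    (b v : Fin d → ℝ) (hgrad : fderiv ℝ f b = 0) (q : ℝ)
    (hHess : ∀ β : Fin d → ℝ, iteratedDeriv 2 (fun t : ℝ => f (β + t • v)) 0 ≤ q) :
    f (b + v) ≤ f b + 1 / 2 * q := by
  have hφ : ContDiff ℝ 2 (fun t : ℝ => f (b + t • v)) := by fun_prop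
  obtain ⟨ξ, -, hξ⟩ := taylor_mean_remainder_lagrange_iteratedDeriv (n := 1)
    (f := fun t : ℝ => f (b + t • v)) (zero_ne_one' ℝ) (by norm_num; exact hφ.contDiffOn)
  have hd : HasDerivAt (fun t : ℝ => f (b + t • v)) 0 0 := by
    have hline : HasDerivAt (fun t : ℝ => b + t • v) v 0 := by
      simpa using ((hasDerivAt_id (0 : ℝ)).smul_const v).const_add b
    have hfb : HasFDerivAt f (0 : (Fin d → ℝ) →L[ℝ] ℝ) (b + (0 : ℝ) • v) := by
      have := (hf.differentiable (by norm_num) b).hasFDerivAt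
      rw [hgrad] at this
      simpa using this
    exact hfb.comp_hasDerivAt (0 : ℝ) hline
  have hdw : derivWithin (fun t : ℝ => f (b + t • v)) (Set.uIcc 0 1) 0 = 0 :=
    hd.hasDerivWithinAt.derivWithin
      ((uniqueDiffOn_uIcc (zero_ne_one' ℝ)) 0 Set.left_mem_uIcc)
  -- the second derivative at `ξ` is the one at `0` along the same line based at `b + ξ • v`
  have hshift : iteratedDeriv 2 (fun t : ℝ => f (b + t • v)) ξ ≤ q := by
    have h1 := iteratedDeriv_comp_const_add 2 (fun t : ℝ => f (b + t • v)) ξ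
    have h2 := hHess (b + ξ • v)
    have h3 : (fun t : ℝ => f (b + ξ • v + t • v)) = fun t : ℝ => f (b + (ξ + t) • v) := by
      funext t
      rw [add_smul, add_assoc]
    rw [h3, h1] at h2
    simpa using h2
  rw [taylorWithinEval_succ, taylor_within_zero_eval, iteratedDerivWithin_one, hdw] at hξ
  norm_num at hξ
  linarith

lemma Matrix.PosDef.exists_eq_transpose_mul_self {d : ℕ} {M : Matrix (Fin d) (Fin d) ℝ}
    (hM : M.PosDef) : ∃ B : Matrix (Fin d) (Fin d) ℝ, M = Bᵀ * B := by
  open scoped MatrixOrder Matrix.Norms.L2Operator in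
  obtain ⟨B, -, hB⟩ := CStarAlgebra.isStrictlyPositive_iff_eq_star_mul_self.mp
    hM.isStrictlyPositive
  exact ⟨B, by rw [hB, star_eq_conjTranspose, conjTranspose_eq_transpose_of_trivial]⟩

lemma lintegral_exp_neg_half_sq (d : ℕ) :
    ∫⁻ y : Fin d → ℝ, ENNReal.ofReal (Real.exp (-(1 / 2 * (y ⬝ᵥ y)))) =
      ENNReal.ofReal ((2 * Real.pi) ^ ((d : ℝ) / 2)) := by
  have hprod : ∀ y : Fin d → ℝ,
      Real.exp (-(1 / 2 * (y ⬝ᵥ y))) = ∏ i, Real.exp (-(1 / 2) * y i ^ 2) := by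
    intro y
    rw [← Real.exp_sum, ← Finset.mul_sum]
    simp [dotProduct, sq]
  simp_rw [hprod]
  rw [← ofReal_integral_eq_lintegral_ofReal]
  · rw [integral_fintype_prod_volume_eq_pow (fun x : ℝ => Real.exp (-(1 / 2) * x ^ 2)),
      integral_gaussian, Fintype.card_fin, Real.sqrt_eq_rpow, ← Real.rpow_natCast,
      ← Real.rpow_mul (by positivity)]
    congr 2 <;> ring
  · exact Integrable.fintype_prod (f := fun _ (x : ℝ) => Real.exp (-(1 / 2) * x ^ 2))
      (fun _ => integrable_exp_neg_mul_sq (by norm_num))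
  · exact Filter.Eventually.of_forall fun y => Finset.prod_nonneg fun i _ => (Real.exp_pos _).le

/-- The Gaussian integral `∫ exp (-xᵀ M x / 2) dx = (2π) ^ (d/2) (det M) ^ (-1/2)`. -/
lemma lintegral_exp_neg_half_quadratic {d : ℕ} {M : Matrix (Fin d) (Fin d) ℝ} (hM : M.PosDef) :
    ∫⁻ x : Fin d → ℝ, ENNReal.ofReal (Real.exp (-(1 / 2 * (x ⬝ᵥ (M *ᵥ x))))) =
      ENNReal.ofReal ((2 * Real.pi) ^ ((d : ℝ) / 2) * M.det ^ (-(1 : ℝ) / 2)) := by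
  obtain ⟨B, hB⟩ := hM.exists_eq_transpose_mul_self
  have hdet : M.det = B.det ^ 2 := by rw [hB, det_mul, det_transpose, sq]
  have hB0 : B.det ≠ 0 := by
    intro h
    have := hM.det_pos
    simp [hdet, h] at this
  have hq : ∀ x : Fin d → ℝ, x ⬝ᵥ (M *ᵥ x) = toLin' B x ⬝ᵥ toLin' B x := by
    intro x
    rw [hB, ← mulVec_mulVec, dotProduct_mulVec, vecMul_transpose, toLin'_apply]
  have hpow : M.det ^ (-(1 : ℝ) / 2) = |B.det⁻¹| := by
    rw [neg_div, Real.rpow_neg hM.det_pos.le, ← Real.sqrt_eq_rpow, hdet, Real.sqrt_sq_eq_abs, abs_inv]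
  have hmeas : Measurable (toLin' B) := (toLin' B).continuous_of_finiteDimensional.measurable
  have hg : Measurable fun y : Fin d → ℝ => ENNReal.ofReal (Real.exp (-(1 / 2 * (y ⬝ᵥ y)))) := by
    unfold dotProduct
    fun_prop
  simp_rw [hq]
  rw [← lintegral_map hg hmeas, Real.map_matrix_volume_pi_eq_smul_volume_pi hB0,
    lintegral_smul_measure, lintegral_exp_neg_half_sq, smul_eq_mul,
    ← ENNReal.ofReal_mul (abs_nonneg _), hpow, mul_comm]

/-- if `f : ℝ^d → ℝ` is `C²` with `∇f(β*) = 0` and its Hessian quadratic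
form (the second directional derivative) is bounded by the symmetric positive-definite
matrix `M`, i.e. `vᵀ H_f(β) v ≤ vᵀ M v` for all `β, v`, then
`f(β) ≤ f(β*) + (1/2)(β - β*)ᵀ M (β - β*)` for all `β`, and consequently
`∫ exp(-f(β)) dβ ≥ exp(-f(β*)) (2π)^{d/2} det(M)^{-1/2}`. -/
theorem taylor_bound_and_gaussian_integral_lower_bound
    {d : ℕ} (f : (Fin d → ℝ) → ℝ) (hf : ContDiff ℝ 2 f)
    (βstar : Fin d → ℝ) (hgrad : fderiv ℝ f βstar = 0)
    (M : Matrix (Fin d) (Fin d) ℝ) (hMsymm : M.IsSymm) (hMpd : M.PosDef)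
    -- `vᵀ H_f(β) v ≤ vᵀ M v`, the left-hand side being the second directional derivative
    (hHess : ∀ β v : Fin d → ℝ,
      iteratedDeriv 2 (fun t : ℝ => f (β + t • v)) 0 ≤ v ⬝ᵥ (M *ᵥ v)) :
    (∀ β, f β ≤ f βstar + 1 / 2 * ((β - βstar) ⬝ᵥ (M *ᵥ (β - βstar)))) ∧
    ENNReal.ofReal (Real.exp (-f βstar) * (2 * Real.pi) ^ ((d : ℝ) / 2) *
        M.det ^ (-(1 : ℝ) / 2)) ≤
      ∫⁻ β, ENNReal.ofReal (Real.exp (-f β)) := by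
  have htaylor : ∀ β, f β ≤ f βstar + 1 / 2 * ((β - βstar) ⬝ᵥ (M *ᵥ (β - βstar))) := by
    intro β
    have := le_quadratic_of_hessian_le f hf βstar (β - βstar) hgrad _ fun x => hHess x (β - βstar)
    rwa [add_sub_cancel] at this
  refine ⟨htaylor, ?_⟩
  calc ENNReal.ofReal (Real.exp (-f βstar) * (2 * Real.pi) ^ ((d : ℝ) / 2) *
        M.det ^ (-(1 : ℝ) / 2))
      = ENNReal.ofReal (Real.exp (-f βstar)) *
          ∫⁻ x : Fin d → ℝ, ENNReal.ofReal (Real.exp (-(1 / 2 * (x ⬝ᵥ (M *ᵥ x))))) := by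
        rw [lintegral_exp_neg_half_quadratic hMpd, ← ENNReal.ofReal_mul (Real.exp_pos _).le,
          mul_assoc]
    _ = ENNReal.ofReal (Real.exp (-f βstar)) * ∫⁻ β : Fin d → ℝ,
          ENNReal.ofReal (Real.exp (-(1 / 2 * ((β - βstar) ⬝ᵥ (M *ᵥ (β - βstar)))))) := by
        rw [lintegral_sub_right_eq_self
          (fun x => ENNReal.ofReal (Real.exp (-(1 / 2 * (x ⬝ᵥ (M *ᵥ x))))))]
    _ = ∫⁻ β : Fin d → ℝ, ENNReal.ofReal (Real.exp (-f βstar)) *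
          ENNReal.ofReal (Real.exp (-(1 / 2 * ((β - βstar) ⬝ᵥ (M *ᵥ (β - βstar)))))) :=
        (lintegral_const_mul' _ _ ENNReal.ofReal_ne_top).symm
    _ ≤ ∫⁻ β, ENNReal.ofReal (Real.exp (-f β)) := by
        refine lintegral_mono fun β => ?_
        rw [← ENNReal.ofReal_mul (Real.exp_pos _).le, ← Real.exp_add]
        exact ENNReal.ofReal_le_ofReal (Real.exp_le_exp.mpr (by linarith [htaylor β]))
end
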